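/- Let C be a cluster of Q (a maximal compatible subset of Ψ(Q)_{≥−1}) and let α = Σ_{c∈C} λ_c c with all λ_c positive integers, and set σ = ⟨α,·⟩. Then the only σ-semi-stable representation of Q is the zero representation. -/

import Mathlib

set_option autoImplicit false

noncomputable section

open scoped BigOperators

/-! Basic setup for representations of a quiver with vertex set `V`, arrow set `A`,
tail map `t` and head map `h`, over a field `K`. -/

variable (K : Type) [Field K]
variable {V A : Type} [Fintype V] [DecidableEq V] [Fintype A]

/-- The Euler form of the quiver `(V, A, t, h)`. -/
def eulerForm {R : Type} [CommRing R] (t h : A → V) (x y : V → R) : R :=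
  ∑ i, x i * y i - ∑ a, x (t a) * y (h a)

def natZ (x : V → ℕ) : V → ℤ := fun i => (x i : ℤ)
def intQ (x : V → ℤ) : V → ℚ := fun i => (x i : ℚ)
def natQ (x : V → ℕ) : V → ℚ := fun i => (x i : ℚ)

/-- The weight `⟨α,·⟩`. -/
def weightL (t h : A → V) (α : V → ℤ) : V → ℤ :=
  fun i => eulerForm t h α (fun j => if j = i then 1 else 0)

/-- The weight `−⟨·,α⟩`. -/
def weightR (t h : A → V) (α : V → ℤ) : V → ℤ :=
  fun i => - eulerForm t h (fun j => if j = i then 1 else 0) α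

/-- `IsPathFrom t h i p j` : the list of arrows `p` is a path from `i` to `j`. -/
def IsPathFrom (t h : A → V) : V → List A → V → Prop
  | i, [], j => i = j
  | i, a :: p, j => t a = i ∧ IsPathFrom t h (h a) p j

/-- The quiver has no (nontrivial) oriented cycles. -/
def Acyclic (t h : A → V) : Prop := ∀ (i : V) (p : List A), IsPathFrom t h i p i → p = []

/-- The dimension vector `γ_i` of the projective indecomposable at `i`:
`γ_i(j)` is the number of paths from `i` to `j`. -/
def gammaRoot (t h : A → V) (i : V) : V → ℕ :=
  fun j => Set.ncard {p : List A | IsPathFrom t h i p j}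

/-- A finite-dimensional representation of the quiver `(V, A, t, h)` over `K`. -/
structure QuivRep (K : Type) [Field K] (V A : Type) (t h : A → V) : Type 1 where
  sp : V → Type
  [inst1 : ∀ i, AddCommGroup (sp i)]
  [inst2 : ∀ i, Module K (sp i)]
  [inst3 : ∀ i, FiniteDimensional K (sp i)]
  map : ∀ a : A, sp (t a) →ₗ[K] sp (h a)

attribute [instance] QuivRep.inst1 QuivRep.inst2 QuivRep.inst3

namespace QuivRep

variable {K} {t h : A → V}

/-- The dimension vector of a representation. -/
def dimVec (X : QuivRep K V A t h) : V → ℕ := fun i => Module.finrank K (X.sp i)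

/-- A subrepresentation. -/
structure Sub (X : QuivRep K V A t h) where
  sub : ∀ i, Submodule K (X.sp i)
  le : ∀ a : A, ∀ x ∈ sub (t a), X.map a x ∈ sub (h a)

/-- The dimension vector of a subrepresentation. -/
def Sub.dimVec {X : QuivRep K V A t h} (U : Sub X) : V → ℕ :=
  fun i => Module.finrank K (U.sub i)

/-- The space `Hom_Q(X,Y)` of morphisms of representations, as a submodule of
`Π i, Hom_K(X(i),Y(i))`. -/
def homS (X Y : QuivRep K V A t h) : Submodule K (∀ i, X.sp i →ₗ[K] Y.sp i) where
  carrier := {φ | ∀ a : A, (φ (h a)).comp (X.map a) = (Y.map a).comp (φ (t a))}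
  zero_mem' := by intro a; simp
  add_mem' := by
    intro f g hf hg a
    simp only [Pi.add_apply, LinearMap.add_comp, LinearMap.comp_add, hf a, hg a]
  smul_mem' := by
    intro c f hf a
    simp only [Pi.smul_apply, LinearMap.smul_comp, LinearMap.comp_smul, hf a]

/-- The dimension of `Hom_Q(X,Y)`. -/
def homDim (X Y : QuivRep K V A t h) : ℕ := Module.finrank K (homS X Y)

/-- The map `d^X_Y` from Ringel's canonical exact sequence. -/
def dmap (X Y : QuivRep K V A t h) :
    (∀ i, X.sp i →ₗ[K] Y.sp i) →ₗ[K] (∀ a : A, X.sp (t a) →ₗ[K] Y.sp (h a)) where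
  toFun φ := fun a => (φ (h a)).comp (X.map a) - (Y.map a).comp (φ (t a))
  map_add' f g := by
    funext a
    simp only [Pi.add_apply, LinearMap.add_comp, LinearMap.comp_add]
    abel
  map_smul' c f := by
    funext a
    simp only [Pi.smul_apply, LinearMap.smul_comp, LinearMap.comp_smul, smul_sub,
      RingHom.id_apply]

/-- The dimension of `Ext^1_Q(X,Y)`, i.e. of the cokernel of `d^X_Y`. -/
def extDim (X Y : QuivRep K V A t h) : ℕ :=
  Module.finrank K ((∀ a : A, X.sp (t a) →ₗ[K] Y.sp (h a)) ⧸ LinearMap.range (dmap X Y))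

/-- A rigid representation: `Ext^1_Q(X,X) = 0`. -/
def IsRigid (X : QuivRep K V A t h) : Prop := extDim X X = 0

/-- A Schur representation: `End_Q(X) = K·id`. -/
def IsSchur (X : QuivRep K V A t h) : Prop := homDim X X = 1

/-- An exceptional representation: rigid and Schur. -/
def IsExceptional (X : QuivRep K V A t h) : Prop := IsRigid X ∧ IsSchur X

end QuivRep

/-- `β` is a real Schur root: the dimension vector of an exceptional representation. -/
def isRealSchurRoot (t h : A → V) (β : V → ℕ) : Prop :=
  ∃ X : QuivRep K V A t h, X.dimVec = β ∧ X.IsExceptional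

/-- `ext_Q(α,β)` : the generic (minimal) value of `dim Ext^1_Q` on pairs of
representations of dimension vectors `α`, `β`. -/
def extMin (t h : A → V) (α β : V → ℕ) : ℕ :=
  sInf {n | ∃ X Y : QuivRep K V A t h, X.dimVec = α ∧ Y.dimVec = β ∧ QuivRep.extDim X Y = n}

/-- `hom_Q(α,β)` : the generic (minimal) value of `dim Hom_Q`. -/
def homMin (t h : A → V) (α β : V → ℕ) : ℕ :=
  sInf {n | ∃ X Y : QuivRep K V A t h, X.dimVec = α ∧ Y.dimVec = β ∧ QuivRep.homDim X Y = n}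

/-- `β' ↪ β` : every representation of dimension vector `β` has a subrepresentation of
dimension vector `β'`. -/
def Embeds (t h : A → V) (β' β : V → ℕ) : Prop :=
  ∀ X : QuivRep K V A t h, X.dimVec = β → ∃ U : QuivRep.Sub X, U.dimVec = β'

/-- `σ`-semi-stability of a representation. -/
def IsSemistable {t h : A → V} (σ : V → ℤ) (X : QuivRep K V A t h) : Prop :=
  (∑ i, σ i * (X.dimVec i : ℤ)) = 0 ∧
  ∀ U : QuivRep.Sub X, (∑ i, σ i * (U.dimVec i : ℤ)) ≤ 0

/-- `σ`-stability of a representation. -/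
def IsStable {t h : A → V} (σ : V → ℤ) (X : QuivRep K V A t h) : Prop :=
  (∑ i, σ i * (X.dimVec i : ℤ)) = 0 ∧ X.dimVec ≠ (fun _ => 0) ∧
  ∀ U : QuivRep.Sub X, U.dimVec ≠ (fun _ => 0) → U.dimVec ≠ X.dimVec →
    (∑ i, σ i * (U.dimVec i : ℤ)) < 0

/-- Isomorphism of representations. -/
def RepIso {t h : A → V} (X Y : QuivRep K V A t h) : Prop :=
  ∃ e : ∀ i, X.sp i ≃ₗ[K] Y.sp i,
    ∀ (a : A) (x : X.sp (t a)), e (h a) (X.map a x) = Y.map a (e (t a) x)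

/-- A quiver exceptional sequence of dimension vectors. -/
def IsQES (t h : A → V) {l : ℕ} (b : Fin l → V → ℕ) : Prop :=
  (∀ j, isRealSchurRoot K t h (b j)) ∧
  ∀ i j : Fin l, i < j →
    homMin K t h (b i) (b j) = 0 ∧ extMin K t h (b i) (b j) = 0 ∧
      eulerForm t h (natZ (b j)) (natZ (b i)) ≤ 0

/-- The cone of nonnegative rational linear combinations of a finite set of integral
vectors. -/
def coneOf (C : Finset (V → ℤ)) : Set (V → ℚ) :=
  {x | ∃ lam : (V → ℤ) → ℚ, (∀ c, 0 ≤ lam c) ∧ x = ∑ c ∈ C, lam c • intQ c}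

/-- A compatible subset of the set `Ψ(Q)_{≥ -1}` of almost positive real Schur roots. -/
def IsCompatible (t h : A → V) (C : Finset (V → ℤ)) : Prop :=
  (∀ x ∈ C, (∃ β : V → ℕ, isRealSchurRoot K t h β ∧ x = natZ β) ∨
      (∃ i : V, x = fun j => -(gammaRoot t h i j : ℤ))) ∧
  (∀ x ∈ C, ∀ y ∈ C, x ≠ y →
    (∀ β₁ β₂ : V → ℕ, isRealSchurRoot K t h β₁ → isRealSchurRoot K t h β₂ →
      x = natZ β₁ → y = natZ β₂ → extMin K t h β₁ β₂ = 0) ∧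
    (∀ (β : V → ℕ) (i : V), isRealSchurRoot K t h β →
      x = natZ β → y = (fun j => -(gammaRoot t h i j : ℤ)) → β i = 0))

/-- The domain of semi-invariants `D(β) ⊆ ℚ^{Q_0}`. -/
def Dom (t h : A → V) (β : V → ℕ) : Set (V → ℚ) :=
  {x | eulerForm t h x (natQ β) = 0 ∧
    ∀ β' : V → ℕ, Embeds K t h β' β → eulerForm t h x (natQ β') ≤ 0}

/-- A quiver exceptional set: a subset of `Ψ(Q)_{≥ -1}` of the form
`{β_1,…,β_l, −γ_{i_{l+1}},…,−γ_{i_m}}` with `β_j(i_k) = 0` and whose real-Schur-root part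
can be ordered into a quiver exceptional sequence. -/
def IsQExcSet (t h : A → V) (E : Finset (V → ℤ)) : Prop :=
  ∃ (l m : ℕ) (b : Fin l → V → ℕ) (g : Fin m → V),
    Function.Injective b ∧ Function.Injective g ∧ IsQES K t h b ∧
    (∀ j k, b j (g k) = 0) ∧
    (E : Set (V → ℤ)) =
      (Set.range fun j => natZ (b j)) ∪
      (Set.range fun k => (fun v => -(gammaRoot t h (g k) v : ℤ)))


/-- The underlying graph of the quiver is connected. -/
def IsConnectedQuiver (t h : A → V) : Prop :=
  ∀ i j : V,
    Relation.ReflTransGen (fun u v => ∃ a, (t a = u ∧ h a = v) ∨ (t a = v ∧ h a = u)) i j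

/-- Morphisms of representations. -/
structure RepHom {K : Type} [Field K] {V A : Type} {t h : A → V}
    (X Y : QuivRep K V A t h) : Type where
  app : ∀ i, X.sp i →ₗ[K] Y.sp i
  comm : ∀ a : A, (app (h a)).comp (X.map a) = (Y.map a).comp (app (t a))

namespace RepHom

variable {K₀ : Type} [Field K₀] {t h : A → V}

/-- The identity morphism. -/
def idHom (X : QuivRep K₀ V A t h) : RepHom X X :=
  ⟨fun _ => LinearMap.id, fun a => by ext x; simp⟩

/-- Composition of morphisms. -/
def comp {X Y Z : QuivRep K₀ V A t h} (f : RepHom X Y) (g : RepHom Y Z) : RepHom X Z :=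
  ⟨fun i => (g.app i).comp (f.app i), fun a => by
    ext x
    have hf := LinearMap.congr_fun (f.comm a) x
    have hg := LinearMap.congr_fun (g.comm a) (f.app (t a) x)
    simp only [LinearMap.comp_apply] at hf hg ⊢
    rw [hf, hg]⟩

/-- Sum of morphisms. -/
def add {X Y : QuivRep K₀ V A t h} (f g : RepHom X Y) : RepHom X Y :=
  ⟨fun i => f.app i + g.app i, fun a => by
    simp only [LinearMap.add_comp, LinearMap.comp_add, f.comm a, g.comm a]⟩

/-- Scalar multiple of a morphism. -/
def smul {X Y : QuivRep K₀ V A t h} (c : K₀) (f : RepHom X Y) : RepHom X Y :=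
  ⟨fun i => c • f.app i, fun a => by
    simp only [LinearMap.smul_comp, LinearMap.comp_smul, f.comm a]⟩

end RepHom

/-- The number of arrows `i → j` in the Ext-quiver `Q(𝓔)` of a sequence of dimension
vectors: `−⟨β_i, β_j⟩` for `i ≠ j`. -/
def extMult (t h : A → V) {l : ℕ} (b : Fin l → V → ℕ) (i j : Fin l) : ℕ :=
  if i = j then 0 else (-(eulerForm t h (natZ (b i)) (natZ (b j)))).toNat

/-- The arrow set of the Ext-quiver `Q(𝓔)`. -/
abbrev ExtArrow (t h : A → V) {l : ℕ} (b : Fin l → V → ℕ) : Type :=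
  (i : Fin l) × (j : Fin l) × Fin (extMult t h b i j)

/-- The representation space `rep(Q,β)` as a product of matrix spaces. -/
abbrev RepSpace (t h : A → V) (β : V → ℕ) : Type :=
  ∀ a : A, Matrix (Fin (β (h a))) (Fin (β (t a))) K

/-- The (base-change) action of `GL(β)` on `rep(Q,β)`. -/
def glAct (t h : A → V) {β : V → ℕ}
    (g : ∀ i, Matrix.GeneralLinearGroup (Fin (β i)) K) (W : RepSpace K t h β) :
    RepSpace K t h β :=
  fun a => (g (h a) : Matrix (Fin (β (h a))) (Fin (β (h a))) K) * W a *
    (((g (t a))⁻¹ : Matrix.GeneralLinearGroup (Fin (β (t a))) K) :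
      Matrix (Fin (β (t a))) (Fin (β (t a))) K)

/-- A polynomial function on `rep(Q,β)`. -/
def IsPolyFun (t h : A → V) {β : V → ℕ} (f : RepSpace K t h β → K) : Prop :=
  ∃ P : MvPolynomial ((a : A) × (Fin (β (h a)) × Fin (β (t a)))) K,
    ∀ W, f W = MvPolynomial.eval (fun x => W x.1 x.2.1 x.2.2) P

/-- The weight space `SI(Q,β)_σ` of semi-invariant polynomial functions of weight `σ`. -/
def SIweight (t h : A → V) (β : V → ℕ) (σ : V → ℤ) :
    Submodule K (RepSpace K t h β → K) where
  carrier := {f | IsPolyFun K t h f ∧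
    ∀ (g : ∀ i, Matrix.GeneralLinearGroup (Fin (β i)) K) (W : RepSpace K t h β),
      f (glAct K t h g W) =
        (((∏ i, (Matrix.GeneralLinearGroup.det (g i)) ^ σ i : Kˣ) : K)) * f W}
  zero_mem' := by
    refine ⟨⟨0, by simp⟩, by simp⟩
  add_mem' := by
    rintro f g ⟨⟨P, hP⟩, hf⟩ ⟨⟨Q, hQ⟩, hg⟩
    refine ⟨⟨P + Q, fun W => ?_⟩, fun gg W => ?_⟩
    · simp [hP W, hQ W]
    · simp only [Pi.add_apply, hf gg W, hg gg W]; ring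
  smul_mem' := by
    rintro c f ⟨⟨P, hP⟩, hf⟩
    refine ⟨⟨MvPolynomial.C c * P, fun W => ?_⟩, fun gg W => ?_⟩
    · simp [hP W]
    · simp only [Pi.smul_apply, hf gg W, smul_eq_mul]; ring

/-- Entry of a matrix accessed through natural-number indices. -/
def entryN {m n : ℕ} (M : Matrix (Fin m) (Fin n) K) (r c : ℕ) : K :=
  if hr : r < m then (if hc : c < n then M ⟨r, hr⟩ ⟨c, hc⟩ else 0) else 0

/-- The matrix of the map `d^V_W` (with `V` of dimension vector `α` varying and `W` of
dimension vector `w` fixed), in the standard bases. -/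
def schofieldMatrix (t h : A → V) {α w : V → ℕ}
    (Vm : RepSpace K t h α) (W : RepSpace K t h w) :
    Matrix ((a : A) × (Fin (w (h a)) × Fin (α (t a)))) ((i : V) × (Fin (w i) × Fin (α i))) K :=
  fun r c =>
    (if c.1 = h r.1 ∧ (c.2.1 : ℕ) = (r.2.1 : ℕ) then
      entryN K (Vm r.1) (c.2.2 : ℕ) (r.2.2 : ℕ) else 0)
    - (if c.1 = t r.1 ∧ (c.2.2 : ℕ) = (r.2.2 : ℕ) then
      entryN K (W r.1) (r.2.1 : ℕ) (c.2.1 : ℕ) else 0)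

/-- The Schofield semi-invariant `c_W : rep(Q,α) → K`, `V ↦ det d^V_W` (defined when
`⟨α, dim W⟩ = 0`, i.e. when `d^V_W` is a square matrix). -/
def schofieldSI (t h : A → V) {α w : V → ℕ} (W : RepSpace K t h w)
    (Vm : RepSpace K t h α) : K :=
  if hc : Fintype.card ((i : V) × (Fin (w i) × Fin (α i))) =
      Fintype.card ((a : A) × (Fin (w (h a)) × Fin (α (t a)))) then
    ((schofieldMatrix K t h Vm W).submatrix (Fintype.equivOfCardEq hc) id).det
  else 0

/-- The representation of `Q` attached to a point of `rep(Q,β)`. -/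
def toRep (t h : A → V) {β : V → ℕ} (W : RepSpace K t h β) : QuivRep K V A t h where
  sp i := Fin (β i) → K
  map a := Matrix.mulVecLin (W a)

namespace QuivRep

variable {K} {t h : A → V}

/-- Vanishing of `Ext^1`. -/
def Ext0 (X Y : QuivRep K V A t h) : Prop := Function.Surjective (dmap X Y)

theorem mem_homS {X Y : QuivRep K V A t h} {φ : ∀ i, X.sp i →ₗ[K] Y.sp i} :
    φ ∈ homS X Y ↔ ∀ a x, φ (h a) (X.map a x) = Y.map a (φ (t a) x) := by
  constructor
  · intro H a x
    exact LinearMap.congr_fun (H a) x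
  · intro H a
    ext x
    exact H a x

theorem ext0_iff' {X Y : QuivRep K V A t h} :
    Ext0 X Y ↔ ∀ c : (∀ a, X.sp (t a) →ₗ[K] Y.sp (h a)), ∃ φ : ∀ i, X.sp i →ₗ[K] Y.sp i,
      ∀ a x, φ (h a) (X.map a x) - Y.map a (φ (t a) x) = c a x := by
  constructor
  · intro H c
    obtain ⟨φ, hφ⟩ := H c
    refine ⟨φ, fun a x => ?_⟩
    rw [← hφ]; rfl
  · intro H c
    obtain ⟨φ, hφ⟩ := H c
    refine ⟨φ, ?_⟩
    funext a
    ext x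
    exact hφ a x

theorem extDim_eq_zero_iff {X Y : QuivRep K V A t h} : extDim X Y = 0 ↔ Ext0 X Y := by
  unfold extDim Ext0
  rw [Module.finrank_zero_iff, Submodule.Quotient.subsingleton_iff,
    LinearMap.range_eq_top]

theorem euler_eq (X Y : QuivRep K V A t h) :
    eulerForm t h (natZ X.dimVec) (natZ Y.dimVec) = (homDim X Y : ℤ) - extDim X Y := by
  have hk : homS X Y = LinearMap.ker (dmap X Y) := by
    ext φ
    rw [mem_homS, LinearMap.mem_ker]
    constructor
    · intro H
      funext a
      ext x
      change φ (h a) (X.map a x) - Y.map a (φ (t a) x) = 0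
      rw [H, sub_self]
    · intro H a x
      have := LinearMap.congr_fun (congrFun H a) x
      exact sub_eq_zero.mp this
  have h1 := LinearMap.finrank_range_add_finrank_ker (dmap X Y)
  have h2 := Submodule.finrank_quotient_add_finrank (LinearMap.range (dmap X Y))
  rw [Module.finrank_pi_fintype] at h1 h2
  simp only [Module.finrank_linearMap] at h1 h2
  unfold homDim extDim eulerForm natZ dimVec
  rw [hk]
  zify at h1 h2
  linarith

theorem ext0_quot {X Y Y' : QuivRep K V A t h} (p : ∀ i, Y.sp i →ₗ[K] Y'.sp i)
    (hp : p ∈ homS Y Y') (hs : ∀ i, Function.Surjective (p i)) (H : Ext0 X Y) : Ext0 X Y' := by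
  rw [ext0_iff'] at H ⊢
  rw [mem_homS] at hp
  intro c
  choose s hsec using fun i => (p i).exists_rightInverse_of_surjective
    (LinearMap.range_eq_top.mpr (hs i))
  obtain ⟨φ, hφ⟩ := H (fun a => (s (h a)).comp (c a))
  refine ⟨fun i => (p i).comp (φ i), fun a x => ?_⟩
  have h1 := congrArg (p (h a)) (hφ a x)
  have h2 := LinearMap.congr_fun (hsec (h a)) (c a x)
  simp only [LinearMap.comp_apply, map_sub, LinearMap.id_apply, hp] at h1 h2 ⊢
  rw [h1, h2]

theorem ext0_sub {X X' Y : QuivRep K V A t h} (p : ∀ i, X'.sp i →ₗ[K] X.sp i)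
    (hp : p ∈ homS X' X) (hs : ∀ i, Function.Injective (p i)) (H : Ext0 X Y) : Ext0 X' Y := by
  rw [ext0_iff'] at H ⊢
  rw [mem_homS] at hp
  intro c
  choose s hsec using fun i => (p i).exists_leftInverse_of_injective
    (LinearMap.ker_eq_bot.mpr (hs i))
  obtain ⟨φ, hφ⟩ := H (fun a => (c a).comp (s (t a)))
  refine ⟨fun i => (φ i).comp (p i), fun a x => ?_⟩
  have h1 := hφ a (p (t a) x)
  have h2 := LinearMap.congr_fun (hsec (t a)) x
  simp only [LinearMap.comp_apply, LinearMap.id_apply, ← hp] at h1 h2 ⊢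
  rw [h1, h2]

/-- The image of a morphism. -/
def imRep {X Y : QuivRep K V A t h} (φ : ∀ i, X.sp i →ₗ[K] Y.sp i) (hφ : φ ∈ homS X Y) :
    QuivRep K V A t h where
  sp i := LinearMap.range (φ i)
  map a := (Y.map a).restrict (by
    rintro _ ⟨x, rfl⟩
    exact ⟨X.map a x, mem_homS.mp hφ a x⟩)

/-- Inclusion of the image. -/
def imIncl {X Y : QuivRep K V A t h} (φ : ∀ i, X.sp i →ₗ[K] Y.sp i) (hφ : φ ∈ homS X Y) :
    ∀ i, (imRep φ hφ).sp i →ₗ[K] Y.sp i := fun i => (LinearMap.range (φ i)).subtype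

/-- Projection to the image. -/
def imProj {X Y : QuivRep K V A t h} (φ : ∀ i, X.sp i →ₗ[K] Y.sp i) (hφ : φ ∈ homS X Y) :
    ∀ i, X.sp i →ₗ[K] (imRep φ hφ).sp i := fun i => (φ i).rangeRestrict

section im
variable {X Y : QuivRep K V A t h} (φ : ∀ i, X.sp i →ₗ[K] Y.sp i) (hφ : φ ∈ homS X Y)

theorem imIncl_mem : imIncl φ hφ ∈ homS (imRep φ hφ) Y := by
  rw [mem_homS]; intro a x; rfl

theorem imProj_mem : imProj φ hφ ∈ homS X (imRep φ hφ) := by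
  rw [mem_homS]; intro a x
  apply Subtype.ext
  exact mem_homS.mp hφ a x

theorem imIncl_inj (i : V) : Function.Injective (imIncl φ hφ i) := Subtype.val_injective

theorem imProj_surj (i : V) : Function.Surjective (imProj φ hφ i) :=
  LinearMap.surjective_rangeRestrict _

theorem imIncl_imProj (i : V) (x : X.sp i) : imIncl φ hφ i (imProj φ hφ i x) = φ i x := rfl

end im

theorem hr_aux {X Y I : QuivRep K V A t h} (π : ∀ i, X.sp i →ₗ[K] I.sp i)
    (hπ : π ∈ homS X I) (hπs : ∀ i, Function.Surjective (π i))
    (ι : ∀ i, I.sp i →ₗ[K] Y.sp i)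
    (hι : ι ∈ homS I Y) (hιi : ∀ i, Function.Injective (ι i)) (H : Ext0 Y X) :
    ∃ i ∈ homS I X, ∃ p ∈ homS Y I, ∀ v, (π v).comp (i v) + (p v).comp (ι v) = LinearMap.id := by
  rw [ext0_iff'] at H
  rw [mem_homS] at hπ hι
  choose s hs using fun i => (π i).exists_rightInverse_of_surjective
    (LinearMap.range_eq_top.mpr (hπs i))
  choose r hr using fun i => (ι i).exists_leftInverse_of_injective
    (LinearMap.ker_eq_bot.mpr (hιi i))
  have hs' : ∀ i x, π i (s i x) = x := fun i x => LinearMap.congr_fun (hs i) x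
  have hr' : ∀ i x, r i (ι i x) = x := fun i x => LinearMap.congr_fun (hr i) x
  obtain ⟨j, hj⟩ := H (fun a => (s (h a)).comp (dmap Y I r a))
  have hj' : ∀ a x, j (h a) (Y.map a x) - X.map a (j (t a) x) =
    s (h a) (r (h a) (Y.map a x) - I.map a (r (t a) x)) := hj
  refine ⟨fun v => (j v).comp (ι v), ?_, fun v => r v - (π v).comp (j v), ?_, ?_⟩
  · rw [mem_homS]
    intro a x
    have := hj' a (ι (t a) x)
    rw [← hι, hr', hr', sub_self, map_zero, sub_eq_zero] at this
    exact this
  · rw [mem_homS]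
    intro a x
    have := congrArg (π (h a)) (hj' a x)
    rw [hs', map_sub, hπ] at this
    simp only [LinearMap.sub_apply, LinearMap.comp_apply, map_sub]
    rw [sub_eq_sub_iff_add_eq_add] at this ⊢
    rw [← this, add_comm]
  · intro v
    ext x
    simp [hr']

/-- Non-injective endomorphisms have trace zero. -/
def TrZ (X : QuivRep K V A t h) : Prop :=
  ∀ f ∈ homS X X, (∃ v, ¬ Function.Injective (f v)) → ∑ v, LinearMap.trace K _ (f v) = 0

theorem hr_inj [CharZero K] {X Y : QuivRep K V A t h} (H : Ext0 Y X) (hX : TrZ X) (hY : TrZ Y)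
    (hd : X.dimVec = Y.dimVec) (φ : ∀ i, X.sp i →ₗ[K] Y.sp i) (hφ : φ ∈ homS X Y)
    (h0 : φ ≠ 0) : ∀ v, Function.Injective (φ v) := by
  by_contra hcon
  push Not at hcon
  obtain ⟨v, hv⟩ := hcon
  obtain ⟨i, hi, p, hp, hid⟩ := hr_aux (imProj φ hφ) (imProj_mem φ hφ) (imProj_surj φ hφ)
    (imIncl φ hφ) (imIncl_mem φ hφ) (imIncl_inj φ hφ) H
  have hlt : Module.finrank K ((imRep φ hφ).sp v) < Module.finrank K (X.sp v) := by
    have h1 := LinearMap.finrank_range_add_finrank_ker (φ v)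
    have h2 : 0 < Module.finrank K (LinearMap.ker (φ v)) := by
      rw [Module.finrank_pos_iff, Submodule.nontrivial_iff_ne_bot]
      intro hb
      exact hv (LinearMap.ker_eq_bot.mp hb)
    change Module.finrank K (LinearMap.range (φ v)) < _
    omega
  have t1 := hX (fun v => (i v).comp (imProj φ hφ v)) (by
    rw [mem_homS] at hi ⊢
    intro a x
    have := mem_homS.mp (imProj_mem φ hφ) a x
    simp only [LinearMap.comp_apply]
    rw [this, hi]) ⟨v, by
    intro hinj
    have := LinearMap.finrank_le_finrank_of_injective (f := imProj φ hφ v) (by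
      exact Function.Injective.of_comp hinj)
    omega⟩
  have t2 := hY (fun v => (imIncl φ hφ v).comp (p v)) (by
    rw [mem_homS] at hp ⊢
    intro a x
    have := mem_homS.mp (imIncl_mem φ hφ) a (p (t a) x)
    simp only [LinearMap.comp_apply]
    rw [hp, this]) ⟨v, by
    intro hinj
    have := LinearMap.finrank_le_finrank_of_injective (f := p v) (by
      rw [LinearMap.coe_comp] at hinj
      exact Function.Injective.of_comp hinj)
    have h3 : Module.finrank K (X.sp v) = Module.finrank K (Y.sp v) := congrFun hd v
    omega⟩
  have t3 : ∑ v, LinearMap.trace K ((imRep φ hφ).sp v) LinearMap.id = 0 := by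
    rw [← add_zero (0 : K)]
    nth_rw 1 [← t1]
    rw [← t2, ← Finset.sum_add_distrib]
    refine Finset.sum_congr rfl fun v _ => ?_
    rw [← hid v, map_add, LinearMap.trace_comp_comm' (imProj φ hφ v),
      LinearMap.trace_comp_comm' (p v)]
  simp only [LinearMap.trace_id] at t3
  have t4 : ∑ v, Module.finrank K ((imRep φ hφ).sp v) = 0 := by exact_mod_cast t3
  rw [Finset.sum_eq_zero_iff] at t4
  apply h0
  funext w
  have := t4 w (Finset.mem_univ _)
  change Module.finrank K (LinearMap.range (φ w)) = 0 at this
  rw [Submodule.finrank_eq_zero, LinearMap.range_eq_bot] at this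
  exact this

theorem IsSchur.trZ {X : QuivRep K V A t h} (hX : IsSchur X) : TrZ X := by
  intro f hf ⟨v, hv⟩
  have hid : (fun _ => LinearMap.id) ∈ homS X X := by
    rw [mem_homS]; intro a x; rfl
  have hne : (⟨fun _ => LinearMap.id, hid⟩ : homS X X) ≠ 0 := by
    intro h0
    apply hv
    have h1 : LinearMap.id = (0 : X.sp v →ₗ[K] X.sp v) := congrFun (congrArg Subtype.val h0) v
    intro x y _
    have hx := LinearMap.congr_fun h1 x
    have hy := LinearMap.congr_fun h1 y
    simp at hx hy
    rw [hx, hy]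
  obtain ⟨c, hc⟩ := (finrank_eq_one_iff_of_nonzero' _ hne).mp hX ⟨f, hf⟩
  have hc' : ∀ w, c • (LinearMap.id : X.sp w →ₗ[K] X.sp w) = f w := fun w =>
    congrFun (congrArg Subtype.val hc) w
  have hc0 : c = 0 := by
    by_contra hc0
    apply hv
    rw [← hc' v]
    intro x y hxy
    simpa [hc0] using hxy
  simp [← hc', hc0]

end QuivRep

theorem pencil_surj {F M N : Type} [Field F] [AddCommGroup M] [Module F M]
    [AddCommGroup N] [Module F N] [FiniteDimensional F M] [FiniteDimensional F N]
    (D : F → M →ₗ[F] N) (E : M →ₗ[F] N) (s₀ : F)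
    (hD : ∀ s, D s = D s₀ + (s - s₀) • E) (h0 : Function.Surjective (D s₀)) :
    {s | ¬ Function.Surjective (D s)}.Finite := by
  obtain ⟨R, hR⟩ := (D s₀).exists_rightInverse_of_surjective (LinearMap.range_eq_top.mpr h0)
  have hfin := Module.End.finite_hasEigenvalue (E.comp R : Module.End F N)
  refine (hfin.image (fun μ => s₀ - μ⁻¹)).subset ?_
  intro s hs
  have hs0 : s - s₀ ≠ 0 := by
    intro h
    apply hs
    rw [hD, h, zero_smul, add_zero]
    exact h0
  refine ⟨-(s - s₀)⁻¹, ?_, by simp⟩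
  by_contra hne
  apply hs
  have hinj : Function.Injective ((D s).comp R) := by
    rw [← LinearMap.ker_eq_bot, LinearMap.ker_eq_bot']
    intro x hx
    by_contra hx0
    apply hne
    apply Module.End.hasEigenvalue_of_hasEigenvector (x := x)
    refine ⟨?_, hx0⟩
    rw [Module.End.mem_eigenspace_iff]
    have h1 : D s₀ (R x) = x := LinearMap.congr_fun hR x
    rw [hD] at hx
    simp only [LinearMap.comp_apply, LinearMap.add_apply, LinearMap.smul_apply, h1] at hx ⊢
    have h2 : (s - s₀) • E (R x) = - x := by
      rw [eq_neg_iff_add_eq_zero, add_comm]; exact hx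
    rw [neg_smul, ← smul_neg, ← h2, smul_smul, inv_mul_cancel₀ hs0, one_smul]
  have := (LinearMap.injective_iff_surjective.mp hinj)
  rw [LinearMap.coe_comp] at this
  exact Function.Surjective.of_comp this

namespace QuivRep

variable {K} {t h : A → V}

/-- A line in the representation space. -/
abbrev lineRep (X : QuivRep K V A t h) (B : ∀ a, X.sp (t a) →ₗ[K] X.sp (h a)) (s : K) :
    QuivRep K V A t h where
  sp := X.sp
  map a := X.map a + s • B a

theorem line_left (X Y : QuivRep K V A t h) (B : ∀ a, X.sp (t a) →ₗ[K] X.sp (h a)) (s₀ : K)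
    (H : Ext0 (lineRep X B s₀) Y) : {s | ¬ Ext0 (lineRep X B s) Y}.Finite := by
  let E : (∀ i, X.sp i →ₗ[K] Y.sp i) →ₗ[K] (∀ a : A, X.sp (t a) →ₗ[K] Y.sp (h a)) :=
    { toFun := fun φ a => (φ (h a)).comp (B a)
      map_add' := fun f g => by funext a; ext x; simp
      map_smul' := fun c f => by funext a; ext x; simp }
  let D : K → (∀ i, X.sp i →ₗ[K] Y.sp i) →ₗ[K] (∀ a : A, X.sp (t a) →ₗ[K] Y.sp (h a)) :=
    fun s => dmap (lineRep X B s) Y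
  refine pencil_surj D E s₀ ?_ H
  intro s
  apply LinearMap.ext
  intro φ
  funext a
  ext x
  change φ (h a) (X.map a x + s • B a x) - Y.map a (φ (t a) x) =
    φ (h a) (X.map a x + s₀ • B a x) - Y.map a (φ (t a) x) + (s - s₀) • φ (h a) (B a x)
  simp only [map_add, map_smul, sub_smul]
  abel

theorem line_right (X Y : QuivRep K V A t h) (B : ∀ a, Y.sp (t a) →ₗ[K] Y.sp (h a)) (s₀ : K)
    (H : Ext0 X (lineRep Y B s₀)) : {s | ¬ Ext0 X (lineRep Y B s)}.Finite := by
  let E : (∀ i, X.sp i →ₗ[K] Y.sp i) →ₗ[K] (∀ a : A, X.sp (t a) →ₗ[K] Y.sp (h a)) :=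
    { toFun := fun φ a => -(B a).comp (φ (t a))
      map_add' := fun f g => by funext a; ext x; simp; abel
      map_smul' := fun c f => by funext a; ext x; simp }
  let D : K → (∀ i, X.sp i →ₗ[K] Y.sp i) →ₗ[K] (∀ a : A, X.sp (t a) →ₗ[K] Y.sp (h a)) :=
    fun s => dmap X (lineRep Y B s)
  refine pencil_surj D E s₀ ?_ H
  intro s
  apply LinearMap.ext
  intro φ
  funext a
  ext x
  change φ (h a) (X.map a x) - (Y.map a (φ (t a) x) + s • B a (φ (t a) x)) =
    φ (h a) (X.map a x) - (Y.map a (φ (t a) x) + s₀ • B a (φ (t a) x))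
      + (s - s₀) • -(B a (φ (t a) x))
  simp only [smul_neg, sub_smul]
  abel

theorem line_both (X : QuivRep K V A t h) (B : ∀ a, X.sp (t a) →ₗ[K] X.sp (h a)) (s₀ : K)
    (H : Ext0 (lineRep X B s₀) (lineRep X B s₀)) :
    {s | ¬ Ext0 (lineRep X B s) (lineRep X B s)}.Finite := by
  let E : (∀ i, X.sp i →ₗ[K] X.sp i) →ₗ[K] (∀ a : A, X.sp (t a) →ₗ[K] X.sp (h a)) :=
    { toFun := fun φ a => (φ (h a)).comp (B a) - (B a).comp (φ (t a))
      map_add' := fun f g => by funext a; ext x; simp; abel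
      map_smul' := fun c f => by funext a; ext x; simp [smul_sub] }
  let D : K → (∀ i, X.sp i →ₗ[K] X.sp i) →ₗ[K] (∀ a : A, X.sp (t a) →ₗ[K] X.sp (h a)) :=
    fun s => dmap (lineRep X B s) (lineRep X B s)
  refine pencil_surj D E s₀ ?_ H
  intro s
  apply LinearMap.ext
  intro φ
  funext a
  ext x
  change φ (h a) (X.map a x + s • B a x) - (X.map a (φ (t a) x) + s • B a (φ (t a) x)) =
    φ (h a) (X.map a x + s₀ • B a x) - (X.map a (φ (t a) x) + s₀ • B a (φ (t a) x))
      + (s - s₀) • (φ (h a) (B a x) - B a (φ (t a) x))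
  simp only [map_add, map_smul, sub_smul, smul_sub]
  abel

theorem lineRep_zero (X : QuivRep K V A t h) (B : ∀ a, X.sp (t a) →ₗ[K] X.sp (h a)) :
    lineRep X B 0 = X := by
  cases X
  simp [lineRep]

theorem homDim_of_ext0 {X Y : QuivRep K V A t h} (H : Ext0 X Y) :
    (homDim X Y : ℤ) = eulerForm t h (natZ X.dimVec) (natZ Y.dimVec) := by
  rw [euler_eq, extDim_eq_zero_iff.mpr H]; simp

theorem exists_ne_zero_of_homDim {X Y : QuivRep K V A t h} (H : homDim X Y ≠ 0) :
    ∃ φ ∈ homS X Y, φ ≠ 0 := by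
  by_contra hc
  push Not at hc
  apply H
  unfold homDim
  rw [Submodule.finrank_eq_zero, Submodule.eq_bot_iff]
  exact hc

theorem line_iso [CharZero K] (X : QuivRep K V A t h) (hX : IsExceptional X)
    (B : ∀ a, X.sp (t a) →ₗ[K] X.sp (h a)) :
    {s | ¬ ∃ φ : ∀ i, X.sp i →ₗ[K] X.sp i, φ ∈ homS X (lineRep X B s) ∧
      ∀ v, Function.Bijective (φ v)}.Finite := by
  have hr : Ext0 X X := extDim_eq_zero_iff.mp hX.1
  have h1 := line_left X X B 0 (by rw [lineRep_zero]; exact hr)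
  have h2 := line_right X X B 0 (by rw [lineRep_zero]; exact hr)
  have h3 := line_both X B 0 (by rw [lineRep_zero]; exact hr)
  refine ((h1.union h2).union h3).subset ?_
  intro s hs
  by_contra hcon
  simp only [Set.mem_union, Set.mem_ofPred_eq, not_or, not_not] at hcon
  obtain ⟨⟨e1, e2⟩, e3⟩ := hcon
  apply hs
  have hd : (lineRep X B s).dimVec = X.dimVec := rfl
  have d0 := homDim_of_ext0 hr
  have d2 := homDim_of_ext0 e2
  have d3 := homDim_of_ext0 e3
  rw [hd] at d2 d3
  rw [hX.2] at d0
  rw [← d0] at d2 d3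
  obtain ⟨φ, hφ, hne⟩ := exists_ne_zero_of_homDim (X := X) (Y := lineRep X B s) (by
    intro h0; rw [h0] at d2; simp at d2)
  have hsch : IsSchur (lineRep X B s) := by
    unfold IsSchur; exact_mod_cast d3
  have hinj := hr_inj e1 hX.2.trZ hsch.trZ rfl φ hφ hne
  exact ⟨φ, hφ, fun v => ⟨hinj v, LinearMap.injective_iff_surjective.mp (hinj v)⟩⟩

/-- direction from `X` to a representation of the same dimension -/
theorem exists_line {X X' : QuivRep K V A t h} (hd : X'.dimVec = X.dimVec) :
    ∃ (B : ∀ a, X.sp (t a) →ₗ[K] X.sp (h a)) (e : ∀ i, X.sp i ≃ₗ[K] X'.sp i),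
      ∀ a x, e (h a) ((lineRep X B 1).map a x) = X'.map a (e (t a) x) := by
  have e : ∀ i, X.sp i ≃ₗ[K] X'.sp i := fun i => LinearEquiv.ofFinrankEq _ _ (congrFun hd i).symm
  refine ⟨fun a => (e (h a)).symm.toLinearMap.comp ((X'.map a).comp (e (t a)).toLinearMap)
    - X.map a, e, fun a x => ?_⟩
  simp

theorem ext0_left [CharZero K] {X X' Y : QuivRep K V A t h} (hX : IsExceptional X)
    (hd : X'.dimVec = X.dimVec) (H : Ext0 X' Y) : Ext0 X Y := by
  obtain ⟨B, e, he⟩ := exists_line hd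
  have h1 : Ext0 (lineRep X B 1) Y :=
    ext0_sub (X' := lineRep X B 1) (fun i => (e i).toLinearMap) (mem_homS.mpr he)
      (fun i => (e i).injective) H
  obtain ⟨s, hs⟩ := ((line_left X Y B 1 h1).union (line_iso X hX B)).exists_notMem
  simp only [Set.mem_union, Set.mem_ofPred_eq, not_or, not_not] at hs
  obtain ⟨h2, φ, hφ, hb⟩ := hs
  exact ext0_sub (X := lineRep X B s) φ hφ (fun i => (hb i).1) h2

theorem ext0_right [CharZero K] {X Y Y' : QuivRep K V A t h} (hY : IsExceptional Y)
    (hd : Y'.dimVec = Y.dimVec) (H : Ext0 X Y') : Ext0 X Y := by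
  obtain ⟨B, e, he⟩ := exists_line hd
  have h1 : Ext0 X (lineRep Y B 1) :=
    ext0_quot (Y' := lineRep Y B 1) (fun i => (e i).symm.toLinearMap) (mem_homS.mpr (by
      intro a x
      apply (e (h a)).injective
      rw [he]
      simp)) (fun i => (e i).symm.surjective) H
  obtain ⟨s, hs⟩ := ((line_right X Y B 1 h1).union (line_iso Y hY B)).exists_notMem
  simp only [Set.mem_union, Set.mem_ofPred_eq, not_or, not_not] at hs
  obtain ⟨h2, φ, hφ, hb⟩ := hs
  let f : ∀ i, Y.sp i ≃ₗ[K] Y.sp i := fun i => LinearEquiv.ofBijective (φ i) (hb i)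
  refine ext0_quot (Y := lineRep Y B s) (fun i => (f i).symm.toLinearMap) (mem_homS.mpr ?_)
    (fun i => (f i).symm.surjective) h2
  intro a x
  apply (f (h a)).injective
  have := mem_homS.mp hφ a ((f (t a)).symm x)
  have h3 : φ (t a) ((f (t a)).symm x) = x := (f (t a)).apply_symm_apply x
  rw [h3] at this
  change _ = φ (h a) _
  simp only [LinearEquiv.coe_coe]
  rw [this]
  exact (f (h a)).apply_symm_apply _

theorem ext0_of_extMin [CharZero K] {X Y : QuivRep K V A t h} (hX : IsExceptional X)
    (hY : IsExceptional Y) (H : extMin K t h X.dimVec Y.dimVec = 0) : Ext0 X Y := by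
  have hne : {n | ∃ X' Y' : QuivRep K V A t h, X'.dimVec = X.dimVec ∧ Y'.dimVec = Y.dimVec ∧
      QuivRep.extDim X' Y' = n}.Nonempty := ⟨_, X, Y, rfl, rfl, rfl⟩
  have := Nat.sInf_mem hne
  obtain ⟨X', Y', h1, h2, h3⟩ := this
  have h4 : extDim X' Y' = 0 := h3.trans H
  exact ext0_left hX h1 (ext0_right hY h2 (extDim_eq_zero_iff.mp h4))

theorem extMin_of_ext0 {X Y : QuivRep K V A t h} (H : Ext0 X Y) :
    extMin K t h X.dimVec Y.dimVec = 0 := by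
  apply Nat.sInf_eq_zero.mpr
  left
  exact ⟨X, Y, rfl, rfl, extDim_eq_zero_iff.mpr H⟩

/-- Universal extension of copies of `R` by `X`. -/
abbrev univExt (X R : QuivRep K V A t h) {n : ℕ} (ξ : Fin n → ∀ a, R.sp (t a) →ₗ[K] X.sp (h a)) :
    QuivRep K V A t h where
  sp v := X.sp v × (Fin n → R.sp v)
  map a := LinearMap.prod
    ((X.map a).comp (LinearMap.fst K _ _) +
      ∑ b, (ξ b a).comp ((LinearMap.proj b).comp (LinearMap.snd K _ _)))
    (LinearMap.pi fun b => (R.map a).comp ((LinearMap.proj b).comp (LinearMap.snd K _ _)))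

theorem univExt_map (X R : QuivRep K V A t h) {n : ℕ}
    (ξ : Fin n → ∀ a, R.sp (t a) →ₗ[K] X.sp (h a)) (a : A) (x : X.sp (t a))
    (τ : Fin n → R.sp (t a)) : (univExt X R ξ).map a (x, τ) =
      (X.map a x + ∑ b, ξ b a (τ b), fun b => R.map a (τ b)) := by
  apply Prod.ext
  · simp [univExt]
  · rfl

theorem univExt_solve (X R Y : QuivRep K V A t h) {n : ℕ}
    (ξ : Fin n → ∀ a, R.sp (t a) →ₗ[K] X.sp (h a)) (H : Ext0 R Y)
    (φ : ∀ i, X.sp i →ₗ[K] Y.sp i)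
    (η : ∀ a, (univExt X R ξ).sp (t a) →ₗ[K] Y.sp (h a))
    (hφ : ∀ a x, φ (h a) (X.map a x) - Y.map a (φ (t a) x) = η a (x, 0)) :
    ∃ φ' : ∀ i, (univExt X R ξ).sp i →ₗ[K] Y.sp i, (∀ i x, φ' i (x, 0) = φ i x) ∧
      ∀ a y, φ' (h a) ((univExt X R ξ).map a y) - Y.map a (φ' (t a) y) = η a y := by
  rw [ext0_iff'] at H
  choose ψ hψ using fun b => H (fun a => (η a).comp
    ((LinearMap.inr K (X.sp (t a)) (Fin n → R.sp (t a))).comp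
      (LinearMap.single K (fun _ => R.sp (t a)) b)) - (φ (h a)).comp (ξ b a))
  let φ' : ∀ i, X.sp i × (Fin n → R.sp i) →ₗ[K] Y.sp i := fun i =>
    (φ i).comp (LinearMap.fst K _ _) +
      ∑ b, (ψ b i).comp ((LinearMap.proj b).comp (LinearMap.snd K _ _))
  have hφ' : ∀ i x τ, φ' i (x, τ) = φ i x + ∑ b, ψ b i (τ b) := by
    intro i x τ
    simp [φ']
  refine ⟨φ', fun i x => ?_, ?_⟩
  · rw [hφ']; simp
  · rintro a ⟨x, τ⟩
    have e1 : φ' (h a) ((univExt X R ξ).map a (x, τ)) = φ (h a) (X.map a x + ∑ b, ξ b a (τ b)) +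
        ∑ b, ψ b (h a) (R.map a (τ b)) := by
      rw [univExt_map]; exact hφ' _ _ _
    have e2 : η a (x, τ) = η a (x, 0) + ∑ b, η a (0, Pi.single b (τ b)) := by
      have : ((x, τ) : X.sp (t a) × (Fin n → R.sp (t a))) =
          (x, 0) + ∑ b, LinearMap.inr K (X.sp (t a)) (Fin n → R.sp (t a))
            (Pi.single b (τ b)) := by
        rw [← map_sum, Finset.univ_sum_single]
        simp
      refine (congrArg (η a) this).trans ?_
      refine (map_add (η a) _ _).trans ?_
      congr 1
      exact map_sum (η a) _ _
    have e3 : ∀ b, ψ b (h a) (R.map a (τ b)) - Y.map a (ψ b (t a) (τ b)) =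
        η a (0, Pi.single b (τ b)) - φ (h a) (ξ b a (τ b)) := fun b => hψ b a (τ b)
    rw [e2, ← hφ]
    refine (congrArg₂ (· - ·) e1 (congrArg (Y.map a) (hφ' (t a) x τ))).trans ?_
    have e4 := Finset.sum_congr (rfl : (Finset.univ : Finset (Fin n)) = _) (fun b _ => e3 b)
    rw [Finset.sum_sub_distrib, Finset.sum_sub_distrib] at e4
    simp only [map_add, map_sum]
    rw [sub_eq_iff_eq_add] at e4
    rw [e4]
    abel

theorem exists_univExt (X R : QuivRep K V A t h) (hR : Ext0 R R) :
    ∃ E : QuivRep K V A t h,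
      (∀ Y, Ext0 X Y → Ext0 R Y → Ext0 E Y) ∧
      (∀ S, Ext0 S X → Ext0 S R → Ext0 S E) ∧ Ext0 R E ∧
      (∀ i, X.dimVec i = 0 → R.dimVec i = 0 → E.dimVec i = 0) ∧
      (∀ W, Ext0 R W → (∃ φ ∈ homS X W, φ ≠ 0) → ∃ φ ∈ homS E W, φ ≠ 0) := by
  let bs := Module.finBasis K (∀ a, R.sp (t a) →ₗ[K] X.sp (h a))
  let ξ := fun b => bs b
  refine ⟨univExt X R ξ, ?_, ?_, ?_, ?_, ?_⟩
  · intro Y h1 h2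
    rw [ext0_iff'] at h1 ⊢
    intro c
    obtain ⟨φ, hφ⟩ := h1 (fun a => (c a).comp (LinearMap.inl K (X.sp (t a)) _))
    obtain ⟨φ', -, h4⟩ := univExt_solve X R Y ξ h2 φ c hφ
    exact ⟨φ', h4⟩
  · intro S h1 h2
    rw [ext0_iff'] at h1 h2 ⊢
    intro c
    choose ψ hψ using fun b => h2 (fun a => (LinearMap.proj b).comp
      ((LinearMap.snd K (X.sp (h a)) (_ → R.sp (h a))).comp (c a)))
    obtain ⟨χ, hχ⟩ := h1 (fun a => (LinearMap.fst K (X.sp (h a)) (_ → R.sp (h a))).comp (c a)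
      + ∑ b, (ξ b a).comp (ψ b (t a)))
    refine ⟨fun i => LinearMap.prod (χ i) (LinearMap.pi fun b => ψ b i), fun a x => ?_⟩
    change (χ (h a) (S.map a x), fun b => ψ b (h a) (S.map a x)) -
      (univExt X R ξ).map a (χ (t a) x, fun b => ψ b (t a) x) = c a x
    rw [univExt_map]
    apply Prod.ext
    · have := hχ a x
      simp only [LinearMap.add_apply, LinearMap.comp_apply, LinearMap.sum_apply] at this
      change χ (h a) (S.map a x) - (X.map a (χ (t a) x) + ∑ b, ξ b a (ψ b (t a) x)) = (c a x).1
      rw [← sub_sub, this]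
      exact add_sub_cancel_right _ _
    · funext b
      exact hψ b a x
  · have h2 := hR
    rw [ext0_iff'] at h2 ⊢
    intro c
    choose ψ hψ using fun b => h2 (fun a => (LinearMap.proj b).comp
      ((LinearMap.snd K (X.sp (h a)) (_ → R.sp (h a))).comp (c a)))
    let v : ∀ a, R.sp (t a) →ₗ[K] X.sp (h a) := fun a =>
      -(LinearMap.fst K (X.sp (h a)) (_ → R.sp (h a))).comp (c a)
        - ∑ b, (ξ b a).comp (ψ b (t a))
    have hv := bs.sum_repr v
    refine ⟨fun i => LinearMap.prod 0 (LinearMap.pi fun b => ψ b i + bs.repr v b • LinearMap.id),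
      fun a x => ?_⟩
    change (0, fun b => ψ b (h a) (R.map a x) + bs.repr v b • (R.map a x)) -
      (univExt X R ξ).map a (0, fun b => ψ b (t a) x + bs.repr v b • x) = c a x
    rw [univExt_map]
    apply Prod.ext
    · have h3 := LinearMap.congr_fun (congrFun hv a) x
      have h4 : v a x = -(c a x).1 - ∑ b, ξ b a (ψ b (t a) x) := by
        simp [v]
      rw [h4, Finset.sum_apply, LinearMap.sum_apply] at h3
      change (0 : X.sp (h a)) - (X.map a 0 + ∑ b, ξ b a (ψ b (t a) x + bs.repr v b • x))
        = (c a x).1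
      simp only [map_add, map_smul, Finset.sum_add_distrib, map_zero]
      have h5 : ∑ b, bs.repr v b • (ξ b a) x = -(c a x).1 - ∑ b, ξ b a (ψ b (t a) x) := h3
      rw [h5]
      abel
    · funext b
      have := hψ b a x
      change (ψ b (h a) (R.map a x) + bs.repr v b • (R.map a x)) -
        R.map a (ψ b (t a) x + bs.repr v b • x) = (c a x).2 b
      rw [map_add, map_smul, add_sub_add_right_eq_sub]
      exact this
  · intro i h1 h2
    change Module.finrank K (X.sp i × (_ → R.sp i)) = 0
    unfold dimVec at h1 h2
    rw [Module.finrank_prod, Module.finrank_pi_fintype]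
    simp [h1, h2]
  · rintro W h1 ⟨φ, hφ, hne⟩
    obtain ⟨φ', h3, h4⟩ := univExt_solve X R W ξ h1 φ (fun a => 0) (by
      intro a x
      rw [mem_homS.mp hφ, sub_self]; rfl)
    refine ⟨φ', mem_homS.mpr fun a y => sub_eq_zero.mp (h4 a y), ?_⟩
    rintro rfl
    apply hne
    funext i
    ext x
    exact (h3 i x).symm

end QuivRep

section paths

variable {t h : A → V}

theorem isPathFrom_append (i j : V) (p q : List A) :
    IsPathFrom t h i (p ++ q) j ↔ ∃ k, IsPathFrom t h i p k ∧ IsPathFrom t h k q j := by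
  induction p generalizing i with
  | nil => simp [IsPathFrom]
  | cons a p ih =>
    simp only [List.cons_append, IsPathFrom, ih]
    constructor
    · rintro ⟨h1, k, h2, h3⟩; exact ⟨k, ⟨h1, h2⟩, h3⟩
    · rintro ⟨k, ⟨h1, h2⟩, h3⟩; exact ⟨h1, k, h2, h3⟩

theorem isPathFrom_snoc (i j : V) (p : List A) (a : A) :
    IsPathFrom t h i (p ++ [a]) j ↔ IsPathFrom t h i p (t a) ∧ h a = j := by
  rw [isPathFrom_append]
  simp only [IsPathFrom]
  constructor
  · rintro ⟨k, h1, rfl, h2⟩; exact ⟨h1, h2⟩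
  · rintro ⟨h1, h2⟩; exact ⟨_, h1, rfl, h2⟩

theorem path_nodup (hQ : Acyclic t h) (i j : V) (p : List A) (hp : IsPathFrom t h i p j) :
    p.Nodup := by
  induction p generalizing i with
  | nil => simp
  | cons a p ih =>
    obtain ⟨h1, h2⟩ := hp
    rw [List.nodup_cons]
    refine ⟨fun ha => ?_, ih _ h2⟩
    obtain ⟨l1, l2, rfl⟩ := List.append_of_mem ha
    rw [isPathFrom_append] at h2
    obtain ⟨k, h3, h4, -⟩ := h2
    have := hQ (t a) (a :: l1) ⟨rfl, by rw [h4]; exact h3⟩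
    simp at this

theorem finite_nodup : {p : List A | p.Nodup}.Finite := by
  classical
  have hf : Finite {p : List A // p.Nodup} := Finite.of_fintype _
  exact Set.finite_coe_iff.mp hf

theorem finite_paths (hQ : Acyclic t h) (i j : V) : {p | IsPathFrom t h i p j}.Finite :=
  finite_nodup.subset fun p hp => path_nodup hQ i j p hp

theorem gamma_rec (hQ : Acyclic t h) (i j : V) :
    gammaRoot t h i j = (if i = j then 1 else 0) +
      ∑ a, if h a = j then gammaRoot t h i (t a) else 0 := by
  classical
  let F : V → Finset (List A) := fun k => (finite_paths hQ i k).toFinset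
  have hF : ∀ k p, p ∈ F k ↔ IsPathFrom t h i p k := by
    intro k p; simp [F]
  have hc : ∀ k, gammaRoot t h i k = (F k).card := fun k => by
    unfold gammaRoot
    rw [Set.ncard_eq_toFinset_card _ (finite_paths hQ i k)]
  have hdec : F j = (if i = j then {[]} else ∅) ∪
      (Finset.univ.filter fun a => h a = j).biUnion fun a => (F (t a)).image (· ++ [a]) := by
    ext p
    simp only [Finset.mem_union, Finset.mem_biUnion, Finset.mem_filter, Finset.mem_univ,
      true_and, Finset.mem_image, hF]
    rcases List.eq_nil_or_concat' p with rfl | ⟨q, a, rfl⟩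
    · simp only [IsPathFrom]
      constructor
      · rintro rfl; left; simp
      · rintro (h1 | ⟨a, _, q, _, h2⟩)
        · by_contra hne; simp [hne] at h1
        · simp at h2
    · rw [isPathFrom_snoc]
      constructor
      · rintro ⟨h1, h2⟩; right; exact ⟨a, h2, q, h1, rfl⟩
      · rintro (h1 | ⟨b, h2, r, h3, h4⟩)
        · split_ifs at h1 <;> simp at h1
        · obtain ⟨rfl, h5⟩ := List.append_inj' h4 rfl
          simp only [List.cons.injEq, and_true] at h5
          subst h5
          exact ⟨h3, h2⟩
  rw [hc, hdec, Finset.card_union_of_disjoint, Finset.card_biUnion]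
  · congr 1
    · split_ifs <;> simp
    · rw [Finset.sum_filter]
      refine Finset.sum_congr rfl fun a _ => ?_
      split_ifs
      · rw [hc, Finset.card_image_of_injective _ (List.append_left_injective [a])]
      · rfl
  · intro a _ b _ hab
    rw [Function.onFun, Finset.disjoint_left]
    intro p hp hp'
    simp only [Finset.mem_image] at hp hp'
    obtain ⟨q, _, rfl⟩ := hp
    obtain ⟨r, _, h4⟩ := hp'
    obtain ⟨-, h5⟩ := List.append_inj' h4 rfl
    simp only [List.cons.injEq, and_true] at h5
    exact hab h5.symm
  · rw [Finset.disjoint_left]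
    intro p hp hp'
    simp only [Finset.mem_biUnion, Finset.mem_image] at hp'
    obtain ⟨a, _, q, _, rfl⟩ := hp'
    split_ifs at hp <;> simp at hp

theorem gamma_self (hQ : Acyclic t h) (i : V) : 0 < gammaRoot t h i i := by
  rw [gamma_rec hQ]; simp

theorem gamma_euler (hQ : Acyclic t h) (i : V) (d : V → ℤ) :
    eulerForm t h (fun j => -(gammaRoot t h i j : ℤ)) d = - d i := by
  have h1 : ∑ j, (gammaRoot t h i j : ℤ) * d j =
      d i + ∑ a, (gammaRoot t h i (t a) : ℤ) * d (h a) := by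
    have : ∀ j, (gammaRoot t h i j : ℤ) * d j = (if i = j then d j else 0) +
        ∑ a, if h a = j then (gammaRoot t h i (t a) : ℤ) * d j else 0 := by
      intro j
      rw [gamma_rec hQ i j]
      push_cast
      rw [add_mul, Finset.sum_mul]
      congr 1
      · split_ifs <;> simp
      · refine Finset.sum_congr rfl fun a _ => ?_
        split_ifs <;> simp
    rw [Finset.sum_congr rfl fun j _ => this j, Finset.sum_add_distrib, Finset.sum_comm]
    simp
  unfold eulerForm
  simp only [neg_mul, Finset.sum_neg_distrib]
  linarith

/-- Paths from `v` avoiding the vertices in `I`. -/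
inductive Pth (t h : A → V) (I : V → Prop) (v : V) : V → Type
  | nil : Pth t h I v v
  | snoc (a : A) (ha : ¬ I (h a)) (p : Pth t h I v (t a)) : Pth t h I v (h a)

/-- underlying list of arrows -/
def Pth.toL {I : V → Prop} {v : V} : ∀ {j : V}, Pth t h I v j → List A
  | _, .nil => []
  | _, .snoc a _ p => p.toL ++ [a]

theorem Pth.toL_path {I : V → Prop} {v j : V} (p : Pth t h I v j) :
    IsPathFrom t h v p.toL j := by
  induction p with
  | nil => rfl
  | snoc a ha p ih => rw [Pth.toL, isPathFrom_snoc]; exact ⟨ih, rfl⟩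

theorem Pth.toL_inj {I : V → Prop} {v : V} {j : V} (p : Pth t h I v j) :
    ∀ {k : V} (q : Pth t h I v k), p.toL = q.toL →
      (⟨j, p⟩ : Σ j, Pth t h I v j) = ⟨k, q⟩ := by
  induction p with
  | nil =>
    intro k q hq
    cases q with
    | nil => rfl
    | snoc b hb q => simp [Pth.toL] at hq
  | snoc a ha p ih =>
    intro k q hq
    cases q with
    | nil => simp [Pth.toL] at hq
    | snoc b hb q =>
      simp only [Pth.toL] at hq
      obtain ⟨h4, h5⟩ := List.append_inj' hq rfl
      simp only [List.cons.injEq, and_true] at h5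
      subst h5
      have := ih q h4
      simp only [Sigma.mk.injEq, heq_eq_eq, true_and] at this
      rw [this]

theorem Pth.fin (hQ : Acyclic t h) (I : V → Prop) (v j : V) : Finite (Pth t h I v j) := by
  have := (finite_paths hQ v j).to_subtype
  refine Finite.of_injective
    (fun p : Pth t h I v j => (⟨p.toL, p.toL_path⟩ : {p | IsPathFrom t h v p j})) ?_
  intro p q hpq
  have := Pth.toL_inj p q (congrArg Subtype.val hpq)
  simpa using this

end paths

namespace QuivRep

variable {K} {t h : A → V}

open Classical in
/-- The projective at `v` of the quiver with the vertices in `I` removed. -/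
abbrev projRep (K : Type) [Field K] (hQ : Acyclic t h) (I : V → Prop) (v : V) :
    QuivRep K V A t h where
  sp j := Pth t h I v j →₀ K
  inst3 j := by
    haveI := Pth.fin hQ I v j
    infer_instance
  map a := if ha : I (h a) then 0 else Finsupp.lmapDomain K K (Pth.snoc a ha)

/-- recursive definition of a solution on the projective -/
def projFun {I : V → Prop} {v : V} (Y : QuivRep K V A t h) (y0 : Y.sp v)
    (c : ∀ a, (Pth t h I v (t a) →₀ K) →ₗ[K] Y.sp (h a)) : ∀ {j : V}, Pth t h I v j → Y.sp j
  | _, .nil => y0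
  | _, .snoc a _ p => Y.map a (projFun Y y0 c p) + c a (Finsupp.single p 1)

theorem proj_solve (hQ : Acyclic t h) (I : V → Prop) (v : V) (Y : QuivRep K V A t h)
    (hY : ∀ i, I i → Y.dimVec i = 0) (y0 : Y.sp v)
    (c : ∀ a, (projRep K hQ I v).sp (t a) →ₗ[K] Y.sp (h a)) :
    ∃ φ : ∀ i, (projRep K hQ I v).sp i →ₗ[K] Y.sp i,
      (∀ a x, φ (h a) ((projRep K hQ I v).map a x) - Y.map a (φ (t a) x) = c a x) ∧
      φ v (Finsupp.single Pth.nil 1) = y0 := by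
  refine ⟨fun i => Finsupp.linearCombination K (fun p => projFun Y y0 c p), ?_, ?_⟩
  · intro a
    by_cases ha : I (h a)
    · have : Subsingleton (Y.sp (h a)) := Module.finrank_zero_iff.mp (hY _ ha)
      intro x
      exact Subsingleton.elim _ _
    · intro x
      induction x using Finsupp.induction_linear with
      | zero => simp
      | add x y hx hy =>
        rw [map_add, map_add, map_add, map_add, map_add, ← hx, ← hy]
        abel
      | single p r =>
        have : (projRep K hQ I v).map a (Finsupp.single p r) =
          Finsupp.single (Pth.snoc a ha p) r := by
          simp [projRep, ha]
        rw [this, Finsupp.linearCombination_single, Finsupp.linearCombination_single]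
        have h2 : Finsupp.single p r = r • Finsupp.single p (1 : K) := by simp
        rw [h2, map_smul, map_smul, ← smul_sub]
        simp [projFun]
  · simp [projFun]

theorem proj_ext0 (hQ : Acyclic t h) (I : V → Prop) (v : V) (Y : QuivRep K V A t h)
    (hY : ∀ i, I i → Y.dimVec i = 0) : Ext0 (projRep K hQ I v) Y := by
  rw [ext0_iff']
  intro c
  obtain ⟨φ, h1, -⟩ := proj_solve hQ I v Y hY 0 c
  exact ⟨φ, h1⟩

theorem proj_hom (hQ : Acyclic t h) (I : V → Prop) (v : V) (Y : QuivRep K V A t h)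
    (hY : ∀ i, I i → Y.dimVec i = 0) (hv : Y.dimVec v ≠ 0) :
    ∃ φ ∈ homS (projRep K hQ I v) Y, φ ≠ 0 := by
  have : Nontrivial (Y.sp v) := Module.finrank_pos_iff.mp (Nat.pos_of_ne_zero hv)
  obtain ⟨y, hy⟩ := exists_ne (0 : Y.sp v)
  obtain ⟨φ, h1, h2⟩ := proj_solve hQ I v Y hY y 0
  refine ⟨φ, mem_homS.mpr fun a x => sub_eq_zero.mp (h1 a x), ?_⟩
  rintro rfl
  exact hy h2.symm

theorem proj_supp (hQ : Acyclic t h) (I : V → Prop) (v : V) (hv : ¬ I v) (i : V) (hi : I i) :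
    (projRep K hQ I v).dimVec i = 0 := by
  have : IsEmpty (Pth t h I v i) := ⟨fun p => by
    cases p with
    | nil => exact hv hi
    | snoc a ha p => exact ha hi⟩
  change Module.finrank K (Pth t h I v i →₀ K) = 0
  rw [Module.finrank_zero_iff]
  infer_instance

/-- Conditions on a candidate new element. -/
structure Good (S : Set (QuivRep K V A t h)) (I : V → Prop) (W Z : QuivRep K V A t h) : Prop where
  rigid : Ext0 Z Z
  extW : Ext0 Z W
  left : ∀ R ∈ S, Ext0 Z R
  right : ∀ R ∈ S, Ext0 R Z
  supp : ∀ i, I i → Z.dimVec i = 0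
  hom : ∃ φ ∈ homS Z W, φ ≠ 0

theorem finrank_im_le {X Y : QuivRep K V A t h} (φ : ∀ i, X.sp i →ₗ[K] Y.sp i)
    (hφ : φ ∈ homS X Y) (i : V) : (imRep φ hφ).dimVec i ≤ X.dimVec i :=
  LinearMap.finrank_range_le (φ i)

theorem finrank_im_lt {X Y : QuivRep K V A t h} (φ : ∀ i, X.sp i →ₗ[K] Y.sp i)
    (hφ : φ ∈ homS X Y) (i : V) (hi : ¬ Function.Injective (φ i)) :
    (imRep φ hφ).dimVec i < X.dimVec i := by
  have h1 := LinearMap.finrank_range_add_finrank_ker (φ i)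
  have h2 : 0 < Module.finrank K (LinearMap.ker (φ i)) := by
    rw [Module.finrank_pos_iff, Submodule.nontrivial_iff_ne_bot]
    intro hb
    exact hi (LinearMap.ker_eq_bot.mp hb)
  change Module.finrank K (LinearMap.range (φ i)) < Module.finrank K (X.sp i)
  omega

section minimal

variable {S : Set (QuivRep K V A t h)} {I : V → Prop} {W Z : QuivRep K V A t h}

theorem min_key (hZ : Good S I W Z)
    (hmin : ∀ Z', Good S I W Z' → ∑ i, Z.dimVec i ≤ ∑ i, Z'.dimVec i)
    (f : ∀ i, Z.sp i →ₗ[K] Z.sp i) (hf : f ∈ homS Z Z) (v : V)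
    (hv : ¬ Function.Injective (f v)) (φ : ∀ i, Z.sp i →ₗ[K] W.sp i) (hφ : φ ∈ homS Z W) :
    ∀ i x, φ i (f i x) = 0 := by
  by_contra hcon
  push Not at hcon
  obtain ⟨i, x, hx⟩ := hcon
  have hg : Good S I W (imRep f hf) := by
    have e1 : Ext0 Z (imRep f hf) := ext0_quot _ (imProj_mem f hf) (imProj_surj f hf) hZ.rigid
    refine ⟨ext0_sub _ (imIncl_mem f hf) (imIncl_inj f hf) e1,
      ext0_sub _ (imIncl_mem f hf) (imIncl_inj f hf) hZ.extW,
      fun R hR => ext0_sub _ (imIncl_mem f hf) (imIncl_inj f hf) (hZ.left R hR),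
      fun R hR => ext0_quot _ (imProj_mem f hf) (imProj_surj f hf) (hZ.right R hR),
      fun i hi => ?_, fun i => (φ i).comp (imIncl f hf i), ?_, ?_⟩
    · have := finrank_im_le f hf i
      have := hZ.supp i hi
      omega
    · rw [mem_homS]
      intro a x
      have := mem_homS.mp (imIncl_mem f hf) a x
      simp only [LinearMap.comp_apply]
      rw [this, mem_homS.mp hφ]
    · intro h0
      apply hx
      exact LinearMap.congr_fun (congrFun h0 i) (imProj f hf i x)
  have h1 := hmin _ hg
  have h2 : ∑ i, (imRep f hf).dimVec i < ∑ i, Z.dimVec i :=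
    Finset.sum_lt_sum (fun i _ => finrank_im_le f hf i)
      ⟨v, Finset.mem_univ _, finrank_im_lt f hf v hv⟩
  omega

theorem sub_scalar_mem {f : ∀ i, Z.sp i →ₗ[K] Z.sp i} (hf : f ∈ homS Z Z) (c : K) :
    (fun i => f i - c • LinearMap.id) ∈ homS Z Z := by
  rw [mem_homS] at hf ⊢
  intro a x
  simp [hf]

theorem eigen_not_inj {f : ∀ i, Z.sp i →ₗ[K] Z.sp i} {c : K} {v : V}
    (hc : Module.End.HasEigenvalue (f v) c) :
    ¬ Function.Injective ((f v - c • LinearMap.id : Z.sp v →ₗ[K] Z.sp v)) := by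
  intro hinj
  obtain ⟨x, hx⟩ := hc.exists_hasEigenvector
  apply hx.2
  apply hinj
  have := hx.apply_eq_smul
  simp [this]

theorem min_trZ [IsAlgClosed K] (hZ : Good S I W Z)
    (hmin : ∀ Z', Good S I W Z' → ∑ i, Z.dimVec i ≤ ∑ i, Z'.dimVec i) : TrZ Z := by
  intro f hf ⟨v, hv⟩
  obtain ⟨φ, hφ, hne⟩ := hZ.hom
  apply Finset.sum_eq_zero
  intro w _
  rw [Module.End.trace_eq_sum_roots_charpoly_of_splits (IsAlgClosed.splits _)]
  apply Multiset.sum_eq_zero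
  intro μ hμ
  have hμ' : Module.End.HasEigenvalue (f w) μ :=
    (Module.End.hasEigenvalue_iff_isRoot_charpoly _ _).mpr (Polynomial.isRoot_of_mem_roots hμ)
  have k1 := min_key hZ hmin f hf v hv φ hφ
  have k2 := min_key hZ hmin _ (sub_scalar_mem hf μ) w (eigen_not_inj hμ') φ hφ
  by_contra hμ0
  apply hne
  funext i
  ext x
  have := k2 i x
  simp only [LinearMap.sub_apply, map_sub, k1, LinearMap.smul_apply, LinearMap.id_apply,
    map_smul, zero_sub, neg_eq_zero, smul_eq_zero, hμ0, false_or] at this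
  exact this

theorem min_exc [IsAlgClosed K] [CharZero K] (hZ : Good S I W Z)
    (hmin : ∀ Z', Good S I W Z' → ∑ i, Z.dimVec i ≤ ∑ i, Z'.dimVec i) : IsExceptional Z := by
  refine ⟨extDim_eq_zero_iff.mpr hZ.rigid, ?_⟩
  have hT := min_trZ hZ hmin
  obtain ⟨φ, hφ, hne⟩ := hZ.hom
  obtain ⟨v, hv⟩ := Function.ne_iff.mp hne
  have hnt : Nontrivial (Z.sp v) := by
    by_contra h0
    rw [not_nontrivial_iff_subsingleton] at h0
    apply hv
    ext x
    rw [Subsingleton.elim x 0, map_zero, map_zero]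
  have hid : (fun _ => LinearMap.id) ∈ homS Z Z := by
    rw [mem_homS]; intro a x; rfl
  unfold IsSchur homDim
  rw [finrank_eq_one_iff']
  refine ⟨⟨_, hid⟩, ?_, ?_⟩
  · intro h0
    obtain ⟨x, hx⟩ := exists_ne (0 : Z.sp v)
    apply hx
    exact LinearMap.congr_fun (congrFun (congrArg Subtype.val h0) v) x
  · rintro ⟨f, hf⟩
    obtain ⟨c, hc⟩ := Module.End.exists_eigenvalue (f v)
    refine ⟨c, ?_⟩
    by_contra hcon
    refine eigen_not_inj hc (hr_inj hZ.rigid hT hT rfl _ (sub_scalar_mem hf c) ?_ v)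
    intro h0
    apply hcon
    apply Subtype.ext
    funext i
    have := congrFun h0 i
    exact (sub_eq_zero.mp this).symm

end minimal

theorem exists_good [CharZero K] (hQ : Acyclic t h) (C : Finset (V → ℤ))
    (I : V → Prop) (S : Set (QuivRep K V A t h))
    (hS : ∀ R ∈ S, IsExceptional R ∧ natZ R.dimVec ∈ C)
    (hSS : ∀ R ∈ S, ∀ R' ∈ S, Ext0 R R')
    (hSI : ∀ R ∈ S, ∀ i, I i → R.dimVec i = 0) (W : QuivRep K V A t h)
    (hSW : ∀ R ∈ S, Ext0 R W) (hWI : ∀ i, I i → W.dimVec i = 0) (v : V)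
    (hv : W.dimVec v ≠ 0) : ∃ Z, Good S I W Z := by
  have key : ∀ D : Finset (V → ℤ), ∃ X : QuivRep K V A t h,
      (∀ Y, (∀ R ∈ S, Ext0 R Y) → (∀ i, I i → Y.dimVec i = 0) → Ext0 X Y) ∧
      (∀ i, I i → X.dimVec i = 0) ∧ (∃ φ ∈ homS X W, φ ≠ 0) ∧
      (∀ R ∈ S, natZ R.dimVec ∈ D → Ext0 R X) := by
    intro D
    induction D using Finset.induction_on with
    | empty =>
      refine ⟨projRep K hQ I v, fun Y _ hY => proj_ext0 hQ I v Y hY,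
        proj_supp hQ I v (fun h0 => hv (hWI v h0)), proj_hom hQ I v W hWI hv, ?_⟩
      intro R _ hR
      simp at hR
    | insert c D _ ih =>
      obtain ⟨X, h1, h2, h3, h4⟩ := ih
      by_cases hc : ∃ R ∈ S, natZ R.dimVec = c
      · obtain ⟨R, hR, rfl⟩ := hc
        obtain ⟨E, e1, e2, e3, e4, e5⟩ := exists_univExt X R (hSS R hR R hR)
        refine ⟨E, fun Y hY hYI => e1 Y (h1 Y hY hYI) (hY R hR),
          fun i hi => e4 i (h2 i hi) (hSI R hR i hi), e5 W (hSW R hR) h3, ?_⟩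
        intro R' hR' hmem
        rcases Finset.mem_insert.mp hmem with heq | hmem
        · refine ext0_left (hS R' hR').1 ?_ e3
          funext i
          have := congrFun heq i
          unfold natZ at this
          exact_mod_cast this.symm
        · exact e2 R' (h4 R' hR' hmem) (hSS R' hR' R hR)
      · refine ⟨X, h1, h2, h3, ?_⟩
        intro R' hR' hmem
        rcases Finset.mem_insert.mp hmem with heq | hmem
        · exact absurd ⟨R', hR', heq⟩ hc
        · exact h4 R' hR' hmem
  obtain ⟨X, h1, h2, h3, h4⟩ := key C
  have h5 : ∀ R ∈ S, Ext0 R X := fun R hR => h4 R hR (hS R hR).2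
  exact ⟨X, h1 X h5 h2, h1 W hSW hWI, fun R hR => h1 R (fun R' hR' => hSS R' hR' R hR)
    (hSI R hR), h5, h2, h3⟩

end QuivRep

theorem euler_sum (t h : A → V) (C : Finset (V → ℤ)) (lam : (V → ℤ) → ℤ) (d : V → ℤ) :
    ∑ i, weightL t h (∑ c ∈ C, lam c • c) i * d i = ∑ c ∈ C, lam c * eulerForm t h c d := by
  have h1 : ∀ x : V → ℤ, ∑ i, weightL t h x i * d i = eulerForm t h x d := by
    intro x
    unfold weightL eulerForm
    simp only [sub_mul, Finset.sum_sub_distrib, Finset.sum_mul]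
    congr 1
    · refine Finset.sum_congr rfl fun i _ => ?_
      rw [Finset.sum_eq_single i] <;> simp +contextual
    · rw [Finset.sum_comm]
      refine Finset.sum_congr rfl fun a _ => ?_
      rw [Finset.sum_eq_single (h a)] <;> simp +contextual [eq_comm]
  rw [h1]
  unfold eulerForm
  simp only [Finset.sum_apply, Pi.smul_apply, smul_eq_mul, Finset.sum_mul, mul_sub,
    Finset.mul_sum, Finset.sum_sub_distrib]
  rw [Finset.sum_comm]
  congr 1
  · refine Finset.sum_congr rfl fun c _ => Finset.sum_congr rfl fun i _ => by ring
  · rw [Finset.sum_comm]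
    refine Finset.sum_congr rfl fun c _ => Finset.sum_congr rfl fun i _ => by ring

theorem natZ_inj {x y : V → ℕ} (hxy : natZ x = natZ y) : x = y := by
  funext i
  have := congrFun hxy i
  unfold natZ at this
  exact_mod_cast this

open QuivRep in
/-- If `C` is a cluster (a maximal compatible subset of `Ψ(Q)_{≥ −1}`)
and `α = Σ_{c ∈ C} λ_c c` with all `λ_c` positive integers, then the only
`⟨α,·⟩`-semi-stable representation is the zero representation. -/
theorem stmt16 [IsAlgClosed K] [CharZero K] (t h : A → V) (hQ : Acyclic t h)
    (C : Finset (V → ℤ)) (hC : IsCompatible K t h C)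
    (hmax : ∀ C' : Finset (V → ℤ), IsCompatible K t h C' → C ⊆ C' → C' = C)
    (lam : (V → ℤ) → ℤ) (hlam : ∀ c ∈ C, 0 < lam c)
    (α : V → ℤ) (hα : α = ∑ c ∈ C, lam c • c)
    (W : QuivRep K V A t h) (hW : IsSemistable K (weightL t h α) W) :
    W.dimVec = fun _ => 0 := by
  classical
  subst hα
  set I : V → Prop := fun i => (fun j => -(gammaRoot t h i j : ℤ)) ∈ C with hI
  set S : Set (QuivRep K V A t h) := {R | IsExceptional R ∧ natZ R.dimVec ∈ C} with hSdef
  have hS : ∀ R ∈ S, IsExceptional R ∧ natZ R.dimVec ∈ C := fun R hR => hR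
  have hneg : ∀ (β : V → ℕ) (i : V), natZ β ≠ fun j => -(gammaRoot t h i j : ℤ) := by
    intro β i heq
    have h1 := congrFun heq i
    have h2 := gamma_self hQ i
    unfold natZ at h1
    omega
  have hRS : ∀ R ∈ S, isRealSchurRoot K t h R.dimVec := fun R hR => ⟨R, rfl, hR.1⟩
  have hSS : ∀ R ∈ S, ∀ R' ∈ S, Ext0 R R' := by
    intro R hR R' hR'
    by_cases heq : natZ R.dimVec = natZ R'.dimVec
    · exact ext0_left hR.1 (natZ_inj heq).symm (extDim_eq_zero_iff.mp hR'.1.1)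
    · exact ext0_of_extMin hR.1 hR'.1
        ((hC.2 _ hR.2 _ hR'.2 heq).1 _ _ (hRS R hR) (hRS R' hR') rfl rfl)
  have hSI : ∀ R ∈ S, ∀ i, I i → R.dimVec i = 0 := by
    intro R hR i hi
    exact (hC.2 _ hR.2 _ hi (hneg _ _)).2 _ i (hRS R hR) rfl rfl
  have hdich : ∀ c ∈ C, (∃ R ∈ S, c = natZ R.dimVec) ∨
      (∃ i, I i ∧ c = fun j => -(gammaRoot t h i j : ℤ)) := by
    intro c hc
    rcases hC.1 c hc with ⟨β, ⟨R, hR, hRe⟩, rfl⟩ | ⟨i, rfl⟩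
    · left
      subst hR
      exact ⟨R, ⟨hRe, hc⟩, rfl⟩
    · right; exact ⟨i, hc, rfl⟩
  -- no morphisms from the positive part to `W`
  have hhom : ∀ R ∈ S, ∀ φ ∈ homS R W, φ = 0 := by
    intro R hR φ hφ
    by_contra hne
    have hle := hW.2 ⟨fun i => LinearMap.range (φ i), by
      rintro a _ ⟨x, rfl⟩
      exact ⟨R.map a x, mem_homS.mp hφ a x⟩⟩
    have hle' : ∑ i, weightL t h (∑ c ∈ C, lam c • c) i * natZ (imRep φ hφ).dimVec i ≤ 0 := hle
    rw [euler_sum] at hle'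
    have hext : ∀ R' ∈ S, Ext0 R' (imRep φ hφ) := fun R' hR' =>
      ext0_quot _ (imProj_mem φ hφ) (imProj_surj φ hφ) (hSS R' hR' R hR)
    have hpos : 0 < ∑ c ∈ C, lam c * eulerForm t h c (natZ (imRep φ hφ).dimVec) := by
      apply Finset.sum_pos'
      · intro c hc
        refine mul_nonneg (hlam c hc).le ?_
        rcases hdich c hc with ⟨R', hR', rfl⟩ | ⟨i, hi, rfl⟩
        · rw [← homDim_of_ext0 (hext R' hR')]
          positivity
        · rw [gamma_euler hQ]
          have h1 := finrank_im_le φ hφ i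
          have h2 := hSI R hR i hi
          have h3 : (imRep φ hφ).dimVec i = 0 := by omega
          simp [natZ, h3]
      · refine ⟨_, hR.2, mul_pos (hlam _ hR.2) ?_⟩
        rw [← homDim_of_ext0 (hext R hR)]
        have : homDim R (imRep φ hφ) ≠ 0 := by
          unfold homDim
          rw [Ne, Submodule.finrank_eq_zero]
          intro hb
          have h1 := imProj_mem φ hφ
          rw [hb, Submodule.mem_bot] at h1
          apply hne
          funext i
          ext x
          rw [← imIncl_imProj φ hφ, h1]
          simp
        omega
    omega
  have hhomD : ∀ R ∈ S, homDim R W = 0 := by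
    intro R hR
    unfold homDim
    rw [Submodule.finrank_eq_zero, Submodule.eq_bot_iff]
    exact hhom R hR
  have hsum : ∑ c ∈ C, lam c * eulerForm t h c (natZ W.dimVec) = 0 := by
    rw [← euler_sum]; exact hW.1
  rw [Finset.sum_eq_zero_iff_of_nonpos] at hsum
  swap
  · intro c hc
    refine mul_nonpos_of_nonneg_of_nonpos (hlam c hc).le ?_
    rcases hdich c hc with ⟨R, hR, rfl⟩ | ⟨i, hi, rfl⟩
    · rw [euler_eq, hhomD R hR]
      simp
    · rw [gamma_euler hQ]
      simp [natZ]
  have hzero : ∀ c ∈ C, eulerForm t h c (natZ W.dimVec) = 0 := fun c hc =>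
    (mul_eq_zero.mp (hsum c hc)).resolve_left (hlam c hc).ne'
  have hSW : ∀ R ∈ S, Ext0 R W := by
    intro R hR
    have := hzero _ hR.2
    rw [euler_eq, hhomD R hR] at this
    rw [← extDim_eq_zero_iff]
    omega
  have hWI : ∀ i, I i → W.dimVec i = 0 := by
    intro i hi
    have := hzero _ hi
    rw [gamma_euler hQ] at this
    unfold natZ at this
    omega
  by_contra hW0
  obtain ⟨v, hv⟩ := Function.ne_iff.mp hW0
  have hex : ∃ n, ∃ Z, Good S I W Z ∧ ∑ i, Z.dimVec i = n := by
    obtain ⟨Z, hZ⟩ := exists_good hQ C I S hS hSS hSI W hSW hWI v hv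
    exact ⟨_, Z, hZ, rfl⟩
  obtain ⟨Z, hZ, hZn⟩ := Nat.find_spec hex
  have hZe : IsExceptional Z := min_exc hZ (fun Z' hZ' => by
    rw [hZn]
    exact Nat.find_min' hex ⟨Z', hZ', rfl⟩)
  have hZr : isRealSchurRoot K t h Z.dimVec := ⟨Z, rfl, hZe⟩
  have hC' : IsCompatible K t h (insert (natZ Z.dimVec) C) := by
    refine ⟨?_, ?_⟩
    · intro x hx
      rcases Finset.mem_insert.mp hx with rfl | hx
      · left; exact ⟨_, hZr, rfl⟩
      · exact hC.1 x hx
    · intro x hx y hy hxy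
      rcases Finset.mem_insert.mp hx with rfl | hx
      · rcases Finset.mem_insert.mp hy with rfl | hy
        · exact absurd rfl hxy
        · refine ⟨?_, ?_⟩
          · rintro β₁ β₂ - ⟨R, rfl, hR⟩ e1 rfl
            rw [← natZ_inj e1]
            exact extMin_of_ext0 (hZ.left R ⟨hR, hy⟩)
          · rintro β i - e1 rfl
            rw [← natZ_inj e1]
            exact hZ.supp i hy
      · rcases Finset.mem_insert.mp hy with rfl | hy
        · refine ⟨?_, ?_⟩
          · rintro β₁ β₂ ⟨R, rfl, hR⟩ - rfl e1
            rw [← natZ_inj e1]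
            exact extMin_of_ext0 (hZ.right R ⟨hR, hx⟩)
          · rintro β i - - e2
            exact absurd e2 (hneg _ _)
        · exact hC.2 x hx y hy hxy
  have hmem : natZ Z.dimVec ∈ C := by
    rw [← hmax _ hC' (Finset.subset_insert _ _)]
    exact Finset.mem_insert_self _ _
  obtain ⟨φ, hφ, hne⟩ := hZ.hom
  exact hne (hhom Z ⟨hZe, hmem⟩ φ hφ)

end
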